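/- For every μ ∈ ℂ with Re μ > 0 and Im μ > 0, the origin 0 lies in the interior of the convex hull (taken in ℂ ≅ ℝ²) of the set {μ (μ − u)^{−2} : u ∈ [0,∞)}. -/

import Mathlib

open MeasureTheory Filter

/-!
Up to positive factors, the area form of the vectors `q_μ(u)` and `q_μ(v)` is
`μ.im * (u - v) * ((μ.re - u) * (μ.re - v) + μ.im ^ 2)`. For `u = 0` and large `v` the last factor
is negative, and `t = μ.re + 2 * μ.im ^ 2 / μ.re` is large enough for `v`. Going cyclically through
the parameters `0`, `t` and `μ.re`, the three area forms then all have the sign of `μ.im`, so the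
corresponding values of `q_μ` wind around `0`. As any three vectors `a`, `b`, `c` of a plane satisfy
`ω b c • a + ω c a • b + ω a b • c = 0`, the origin is a combination of these values with positive
coefficients, and perturbing the coefficients of such a combination fills a neighbourhood of `0`.
-/

section ConvexHull

variable {ι E : Type*} [Fintype ι] [AddCommGroup E] [Module ℝ E]

theorem sum_smul_mem_of_convex_of_zero_mem {s : Set E} (hs : Convex ℝ s) (h0 : (0 : E) ∈ s)
    {c : ι → ℝ} {v : ι → E} (hc : ∀ i, 0 ≤ c i) (hsum : ∑ i, c i ≤ 1) (hv : ∀ i, v i ∈ s) :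
    ∑ i, c i • v i ∈ s := by
  have hmem := hs.sum_mem (t := Finset.univ) (w := fun o : Option ι ↦ o.elim (1 - ∑ i, c i) c)
    (z := fun o ↦ o.elim 0 v)
    (by rintro (_ | i) - <;> simp [hc, hsum]) (by simp [Fintype.sum_option])
    (by rintro (_ | i) - <;> simp [h0, hv])
  simpa [Fintype.sum_option] using hmem

theorem zero_mem_convexHull_range_of_sum_smul_eq_zero [Nonempty ι] {v : ι → E} {w : ι → ℝ}
    (hw : ∀ i, 0 < w i) (hsum : ∑ i, w i • v i = 0) :
    (0 : E) ∈ convexHull ℝ (Set.range v) := by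
  have hmem := Finset.univ.centerMass_mem_convexHull (fun i _ ↦ (hw i).le)
    (Finset.sum_pos (fun i _ ↦ hw i) Finset.univ_nonempty) fun i _ ↦ Set.mem_range_self (f := v) i
  simpa [Finset.centerMass, hsum] using hmem

theorem zero_mem_interior_convexHull_range_of_sum_smul_eq_zero [TopologicalSpace E]
    [IsTopologicalAddGroup E] [ContinuousSMul ℝ E] [T2Space E] [Nonempty ι] {v : ι → E}
    (hv : Submodule.span ℝ (Set.range v) = ⊤) {w : ι → ℝ} (hw : ∀ i, 0 < w i)
    (hsum : ∑ i, w i • v i = 0) :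
    (0 : E) ∈ interior (convexHull ℝ (Set.range v)) := by
  let T : (ι → ℝ) →ₗ[ℝ] E := Fintype.linearCombination ℝ v
  have hT : Function.Surjective T :=
    LinearMap.range_eq_top.1 ((Fintype.range_linearCombination ℝ v).trans hv)
  have : FiniteDimensional ℝ E := .of_surjective T hT
  let U : Set (ι → ℝ) := {c | (∀ i, 0 < c i) ∧ ∑ i, c i < 1}
  have hU : IsOpen U := by
    simp only [U, Set.ofPred_and, Set.ofPred_forall]
    exact (isOpen_iInter_of_finite fun i ↦ isOpen_lt continuous_const (continuous_apply i)).inter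
      (isOpen_lt (by fun_prop) continuous_const)
  have hTU : T '' U ⊆ convexHull ℝ (Set.range v) := by
    rintro _ ⟨c, ⟨hc, hc_sum⟩, rfl⟩
    exact sum_smul_mem_of_convex_of_zero_mem (convex_convexHull ℝ _)
      (zero_mem_convexHull_range_of_sum_smul_eq_zero hw hsum) (fun i ↦ (hc i).le) hc_sum.le
      fun i ↦ subset_convexHull ℝ _ (Set.mem_range_self i)
  have hw_sum : 0 < ∑ i, w i := Finset.sum_pos (fun i _ ↦ hw i) Finset.univ_nonempty
  have hwU : (2 * ∑ i, w i)⁻¹ • w ∈ U := by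
    refine ⟨fun i ↦ mul_pos (by positivity) (hw i), ?_⟩
    simp only [Pi.smul_apply, smul_eq_mul, ← Finset.mul_sum]
    field_simp
    norm_num
  have hTw : T ((2 * ∑ i, w i)⁻¹ • w) = 0 := by
    rw [map_smul, Fintype.linearCombination_apply, hsum, smul_zero]
  exact mem_interior.2
    ⟨T '' U, hTU, T.isOpenMap_of_finiteDimensional hT U hU, _, hwU, hTw⟩

end ConvexHull

section AlternatingForm

variable {K E : Type*} [Field K] [AddCommGroup E] [Module K E] {ω : E →ₗ[K] E →ₗ[K] K} {a b : E}

theorem linearIndependent_pair_of_isAlt (hω : ω.IsAlt) (hab : ω a b ≠ 0) :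
    LinearIndependent K ![a, b] := by
  refine LinearIndependent.pair_iff.2 fun s t hst ↦ ⟨?_, ?_⟩
  · simpa [hab, hω.self_eq_zero] using congrArg (ω · b) hst
  · simpa [hab, hω.self_eq_zero] using congrArg (ω a) hst

theorem span_pair_eq_top_of_isAlt (hE : Module.finrank K E = 2) (hω : ω.IsAlt)
    (hab : ω a b ≠ 0) : Submodule.span K {a, b} = ⊤ := by
  have : FiniteDimensional K E := .of_finrank_eq_succ hE
  simpa [Set.pair_comm] using
    (linearIndependent_pair_of_isAlt hω hab).span_eq_top_of_card_eq_finrank' (by simp [hE])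

theorem cyclic_smul_add_eq_zero_of_isAlt (hE : Module.finrank K E = 2) (hω : ω.IsAlt)
    (hab : ω a b ≠ 0) (c : E) : ω b c • a + ω c a • b + ω a b • c = 0 := by
  obtain ⟨s, t, rfl⟩ : ∃ s t : K, s • a + t • b = c :=
    Submodule.mem_span_pair.1 (span_pair_eq_top_of_isAlt hE hω hab ▸ Submodule.mem_top)
  simp only [map_add, map_smul, LinearMap.add_apply, LinearMap.smul_apply, hω.self_eq_zero,
    ← hω.neg a b, smul_eq_mul]
  module

end AlternatingForm

theorem zero_mem_interior_convexHull_triple_of_isAlt {E : Type*} [AddCommGroup E] [Module ℝ E]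
    [TopologicalSpace E] [IsTopologicalAddGroup E] [ContinuousSMul ℝ E] [T2Space E]
    (hE : Module.finrank ℝ E = 2) {ω : E →ₗ[ℝ] E →ₗ[ℝ] ℝ} (hω : ω.IsAlt) {a b c : E}
    (hab : 0 < ω a b) (hbc : 0 < ω b c) (hca : 0 < ω c a) :
    (0 : E) ∈ interior (convexHull ℝ {a, b, c}) := by
  have hrange : Set.range ![a, b, c] = {a, b, c} := by
    rw [Matrix.range_cons, Matrix.range_cons_cons_empty, Set.singleton_union]
  have hspan : Submodule.span ℝ {a, b, c} = ⊤ :=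
    top_unique <| (span_pair_eq_top_of_isAlt hE hω hab.ne').ge.trans <|
      Submodule.span_mono <| by grind
  rw [← hrange] at hspan ⊢
  refine zero_mem_interior_convexHull_range_of_sum_smul_eq_zero hspan
    (w := ![ω b c, ω c a, ω a b]) (by simp [Fin.forall_fin_succ, *]) ?_
  simpa [Fin.sum_univ_three] using cyclic_smul_add_eq_zero_of_isAlt hE hω hab.ne' c

section Complex

open Complex
open scoped ComplexConjugate

attribute [local instance] finrank_real_complex_fact

local notation "ω" => Complex.orientation.areaForm

theorem areaForm_mul_mul (μ z w : ℂ) : ω (μ * z) (μ * w) = normSq μ * ω z w := by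
  simp only [Complex.areaForm, normSq_apply, mul_re, mul_im, map_mul, conj_re, conj_im]
  ring

theorem areaForm_inv_sq_inv_sq (z w : ℂ) :
    ω (z ^ 2)⁻¹ (w ^ 2)⁻¹ = -2 * inner ℝ z w * ω z w / (normSq z * normSq w) ^ 2 := by
  have hconj : conj (z ^ 2)⁻¹ * (w ^ 2)⁻¹ = ((conj z * w) ^ 2)⁻¹ := by
    rw [map_inv₀, map_pow, mul_pow, mul_inv]
  have hinner : inner ℝ z w = (conj z * w).re := by rw [Complex.inner, mul_comm]
  rw [Complex.areaForm, Complex.areaForm, hconj, hinner, inv_im, map_pow, map_mul, normSq_conj,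
    pow_two (conj z * w), mul_im]
  ring

/-- The integrand `q_μ(u) = μ (μ - u)⁻²` of `Φ_∞(μ)`; Lean's inverse makes it `0` at `u = μ`. -/
noncomputable def qmu (μ : ℂ) (u : ℝ) : ℂ := μ * ((μ - u) ^ 2)⁻¹

theorem areaForm_qmu (μ : ℂ) (u v : ℝ) :
    ω (qmu μ u) (qmu μ v) =
      2 * normSq μ * μ.im * ((u - v) * ((μ.re - u) * (μ.re - v) + μ.im ^ 2)) /
        (normSq (μ - u) * normSq (μ - v)) ^ 2 := by
  have hinner : inner ℝ (μ - u) (μ - v) = (μ.re - u) * (μ.re - v) + μ.im ^ 2 := by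
    simp only [Complex.inner, mul_re, conj_re, conj_im, sub_re, sub_im, ofReal_re, ofReal_im]
    ring
  have harea : ω (μ - u) (μ - v) = μ.im * (v - u) := by
    simp only [Complex.areaForm, mul_im, conj_re, conj_im, sub_re, sub_im, ofReal_re, ofReal_im]
    ring
  rw [qmu, qmu, areaForm_mul_mul, areaForm_inv_sq_inv_sq, hinner, harea]
  ring

theorem im_mul_areaForm_qmu_pos {μ : ℂ} (him : μ.im ≠ 0) {u v : ℝ}
    (h : 0 < (u - v) * ((μ.re - u) * (μ.re - v) + μ.im ^ 2)) :
    0 < μ.im * ω (qmu μ u) (qmu μ v) := by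
  have hsub (t : ℝ) : 0 < normSq (μ - t) :=
    normSq_pos.2 fun h0 ↦ him (by simpa using congrArg im h0)
  have hμ : 0 < normSq μ := by simpa using hsub 0
  have hu := hsub u
  have hv := hsub v
  calc
    0 < 2 * normSq μ * μ.im ^ 2 * ((u - v) * ((μ.re - u) * (μ.re - v) + μ.im ^ 2)) /
        (normSq (μ - u) * normSq (μ - v)) ^ 2 := by positivity
    _ = μ.im * ω (qmu μ u) (qmu μ v) := by rw [areaForm_qmu]; ring

theorem zero_mem_interior_convexHull_qmu_general (μ : ℂ) (hre : 0 < μ.re) (him : μ.im ≠ 0) :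
    (0 : ℂ) ∈ interior (convexHull ℝ (qmu μ '' Set.Ici 0)) := by
  set t : ℝ := μ.re + 2 * μ.im ^ 2 / μ.re with ht_def
  have ht : (μ.re - t) * μ.re = -2 * μ.im ^ 2 := by rw [ht_def]; field_simp; ring
  have him_sq : 0 < μ.im ^ 2 := by positivity
  have hre_lt : μ.re < t := lt_add_of_pos_right _ (by positivity)
  have hsubset : {qmu μ 0, qmu μ t, qmu μ μ.re} ⊆ qmu μ '' Set.Ici 0 := by
    rintro _ (rfl | rfl | rfl) <;> exact Set.mem_image_of_mem _ (by grind)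
  have hω : (μ.im • ω).IsAlt := fun z ↦ by simp
  have hpos_zero_t : 0 < (μ.im • ω) (qmu μ 0) (qmu μ t) :=
    im_mul_areaForm_qmu_pos him (mul_pos_of_neg_of_neg (by linarith) (by linarith))
  have hpos_t_re : 0 < (μ.im • ω) (qmu μ t) (qmu μ μ.re) :=
    im_mul_areaForm_qmu_pos him (mul_pos (by linarith) (by linarith))
  have hpos_re_zero : 0 < (μ.im • ω) (qmu μ μ.re) (qmu μ 0) :=
    im_mul_areaForm_qmu_pos him (mul_pos (by linarith) (by linarith))
  exact interior_mono (convexHull_mono hsubset) <|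
    zero_mem_interior_convexHull_triple_of_isAlt finrank_real_complex hω
      hpos_zero_t hpos_t_re hpos_re_zero

end Complex

/-- for `μ` in the open first quadrant, `0` lies in the interior of the
convex hull of `q_μ([0,∞))` where `q_μ(u) = μ (μ-u)⁻²`. -/
theorem zero_mem_interior_convexHull_qmu
    (μ : ℂ) (hre : 0 < μ.re) (him : 0 < μ.im) :
    (0 : ℂ) ∈ interior (convexHull ℝ
      ((fun u : ℝ => μ * ((μ - (u : ℂ)) ^ 2)⁻¹) '' Set.Ici 0)) :=
  zero_mem_interior_convexHull_qmu_general μ hre him.ne'
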